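/- (Decodability of Type II filling, Lemma 6) In the hybrid 2D MACC user-delivery array Q, Condition C3 holds among Type II entries: if two distinct Type II entries Q((j,f),(k_1,k_2)) and Q((j',f'),(k_1',k_2')) carry the same pair (s,e) with s ∈ [S_1'] and e ∈ [K_2]^{t+1}, then the crossing entries Q((j,f),(k_1',k_2')) and Q((j',f'),(k_1,k_2)) are stars. -/

import Mathlib

/-- Lemma 6 (decodability of Type II filling).  Abstract setting: `Qv` is the vertical
user-delivery array (an `F₁' × K₁` array over `Option (Fin S₁')`, `none` = star) satisfying
Condition C3, and `φ j k₁` tells which of the `t` sub-Partition blocks replaces the star of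
`Qv` at `(j,k₁)`.  Rows of the hybrid array `Q` are `(j,f)` with `f : Fin t → ZMod K₂`,
columns are `(k₁,k₂)`; the entry at `((j,f),(k₁,k₂))` is a star iff `Qv j k₁ = none` and
`k₂` lies in the length-`L` cyclic window starting at `f (φ j k₁)`.  A Type II entry at
`((j,f),(k₁,k₂))` with `Qv j k₁ = some s` carries the label `(s,e)` where `e` consists of
`k₂` inserted (at the position of `k₁` in the sorted column set `S_s` of `s`) into the values
`f (φ j x)` for the other columns `x ∈ S_s`, followed by the values of `f` on the sorted
complement of the used block indices.  If two distinct Type II entries carry the same label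
`(s,e)` — expressed below as: equality of the inserted/`S_s` part coordinatewise, and
equality of the trailing sorted-complement lists — then the two crossing entries of `Q` are
stars. -/
theorem stmt_16 (F₁' K₁ S₁' t K₂ L : ℕ) [NeZero K₂] (hL : 0 < L)
    (Qv : Fin F₁' → Fin K₁ → Option (Fin S₁'))
    (hC3 : ∀ (j j' : Fin F₁') (k k' : Fin K₁) (s : Fin S₁'),
      Qv j k = some s → Qv j' k' = some s → (j, k) ≠ (j', k') →
      Qv j k' = none ∧ Qv j' k = none)
    (φ : Fin F₁' → Fin K₁ → Fin t) :
    ∀ (j j' : Fin F₁') (f f' : Fin t → ZMod K₂) (k₁ k₁' : Fin K₁)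
      (k₂ k₂' : ZMod K₂) (s : Fin S₁'),
      Qv j k₁ = some s → Qv j' k₁' = some s →
      ((j, f), (k₁, k₂)) ≠ ((j', f'), (k₁', k₂')) →
      (∀ x : Fin K₁, (∃ j₀, Qv j₀ x = some s) →
        (if x = k₁ then k₂ else f (φ j x)) = (if x = k₁' then k₂' else f' (φ j' x))) →
      (((Finset.univ \ ((Finset.univ.filter
            (fun x : Fin K₁ => ∃ j₀, Qv j₀ x = some s)).erase k₁).image (φ j)).sort
          (· ≤ ·)).map f
        = ((Finset.univ \ ((Finset.univ.filter
            (fun x : Fin K₁ => ∃ j₀, Qv j₀ x = some s)).erase k₁').image (φ j')).sort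
          (· ≤ ·)).map f') →
      (Qv j k₁' = none ∧ (k₂' - f (φ j k₁')).val < L) ∧
      (Qv j' k₁ = none ∧ (k₂ - f' (φ j' k₁)).val < L) := by
  intro j j' f f' k₁ k₁' k₂ k₂' s h h' hne hlab htail
  by_cases hjk : (j, k₁) = (j', k₁')
  · exfalso
    obtain ⟨rfl, rfl⟩ := Prod.mk.inj hjk
    have hk : k₂ = k₂' := by simpa using hlab k₁ ⟨j, h⟩
    subst hk
    apply hne
    have hf : f = f' := by
      funext i
      by_cases hi : i ∈ ((Finset.univ.filter
            (fun x : Fin K₁ => ∃ j₀, Qv j₀ x = some s)).erase k₁).image (φ j)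
      · obtain ⟨x, hx, rfl⟩ := Finset.mem_image.mp hi
        rw [Finset.mem_erase, Finset.mem_filter] at hx
        have := hlab x hx.2.2
        rwa [if_neg hx.1, if_neg hx.1] at this
      · refine List.map_inj_left.mp htail i ?_
        rw [Finset.mem_sort]
        exact Finset.mem_sdiff.mpr ⟨Finset.mem_univ _, hi⟩
    rw [hf]
  · have hst := hC3 j j' k₁ k₁' s h h' hjk
    have hkk : k₁ ≠ k₁' := by
      rintro rfl
      rw [h] at hst
      exact absurd hst.1 (by simp)
    have e1 := hlab k₁' ⟨j', h'⟩
    have e2 := hlab k₁ ⟨j, h⟩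
    rw [if_neg hkk.symm, if_pos rfl] at e1
    rw [if_pos rfl, if_neg hkk] at e2
    refine ⟨⟨hst.1, ?_⟩, ⟨hst.2, ?_⟩⟩
    · rw [e1, sub_self, ZMod.val_zero]; exact hL
    · rw [e2, sub_self, ZMod.val_zero]; exact hL
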